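/- arXiv:1403.2471 — 2 statements merged into one kernel-verified Lean document; each statement's English description precedes it below -/
import Mathlib

section
/- Let m ≥ 1, n ≥ 1, k ≥ 1, and for each t ∈ {1,…,k} let X_t,1,…,X_t,m be n × n real matrices. Let M_t = ∑_{i=1}^m X_{t,i}, and let N_t be the mn × mn block matrix with N_t,(i,p),(j,q) = (X_{t,i})_{p,q} (every block in the i-th block row equals X_{t,i}). Then the characteristic polynomial of the ordered product N₁ N₂ ⋯ N_k equals t^{(m−1)n} times the characteristic polynomial of the ordered product M₁ M₂ ⋯ M_k. In particular, the nonzero eigenvalues (with multiplicity) of ∏_{t=1}^k N_t coincide with those of ∏_{t=1}^k M_t. -/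
open Matrix Polynomial

/-!
A product whose left factor has constant block rows depends on the right factor only through its
block column sums. Hence `N₁ ⋯ N_k` again has constant block rows, with blocks
`X_{1,i} M₂ ⋯ M_k`, which reduces the claim to `k = 1`. There `N = C E`, with `C` the block column
of the `X_i` and `E` the block row of identities, while `E C = ∑ i, X_i`; and the characteristic
polynomials of `C E` and `E C` differ by a power of the variable.
-/

section BlockRowConstant

variable {ι κ μ n p q R : Type*}

/-- The block matrix all of whose blocks in the `i`-th block row equal `A i`, the matrix `N` of
the paper. The set `κ` of block columns and the blocks are arbitrary, so that a single block column
(`κ = Unit`) is covered as well. -/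
def blockRowConstant (κ : Type*) (A : ι → Matrix n p R) : Matrix (ι × n) (κ × p) R :=
  of fun ir jc => A ir.1 ir.2 jc.2

theorem blockRowConstant_mul [NonUnitalNonAssocSemiring R] [Fintype κ] [Fintype p]
    (A : ι → Matrix n p R) (B : κ → Matrix p q R) :
    blockRowConstant κ A * blockRowConstant μ B = blockRowConstant μ fun i => A i * ∑ j, B j := by
  ext ⟨i, r⟩ ⟨_, c⟩
  simp only [blockRowConstant, mul_apply, of_apply, Fintype.sum_prod_type_right, Matrix.sum_apply,
    Finset.mul_sum]

theorem prod_map_blockRowConstant_cons [Semiring R] [Fintype ι] [DecidableEq ι] [Fintype n]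
    [DecidableEq n] (A : ι → Matrix n n R) (l : List (ι → Matrix n n R)) :
    ((A :: l).map (blockRowConstant ι)).prod =
      blockRowConstant ι fun i => A i * (l.map fun B => ∑ j, B j).prod := by
  induction l generalizing A with
  | nil => simp
  | cons B l ih =>
    rw [List.map_cons, List.prod_cons, ih, blockRowConstant_mul]
    simp only [← Finset.sum_mul, List.map_cons, List.prod_cons]

theorem blockRowConstant_eq_mul [NonAssocSemiring R] [Fintype n] [DecidableEq n]
    (A : ι → Matrix p n R) :
    blockRowConstant κ A =
      blockRowConstant Unit A * blockRowConstant κ fun _ : Unit => (1 : Matrix n n R) := by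
  simp [blockRowConstant_mul]

variable [CommRing R] [Fintype ι] [DecidableEq ι] [Fintype n] [DecidableEq n]

theorem charpoly_blockRowConstant_unique [Unique ι] (A : ι → Matrix n n R) :
    (blockRowConstant ι A).charpoly = (A default).charpoly := by
  have reindex_eq : reindex (Equiv.uniqueProd n ι) (Equiv.uniqueProd n ι)
      (blockRowConstant ι A) = A default := rfl
  rw [← charpoly_reindex (Equiv.uniqueProd n ι), reindex_eq]

theorem charpoly_blockRowConstant [Nonempty ι] (A : ι → Matrix n n R) :
    (blockRowConstant ι A).charpoly =
      X ^ ((Fintype.card ι - 1) * Fintype.card n) * (∑ i, A i).charpoly := by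
  have card_le : Fintype.card (Unit × n) ≤ Fintype.card (ι × n) := by
    simpa using Nat.le_mul_of_pos_left _ Fintype.card_pos
  rw [blockRowConstant_eq_mul, charpoly_mul_comm_of_le _ _ card_le, blockRowConstant_mul,
    charpoly_blockRowConstant_unique, Matrix.one_mul]
  simp [Nat.sub_mul]

theorem blockRowConstant_prod_charpoly_general [Nonempty ι] (l : List (ι → Matrix n n R))
    (hl : l ≠ []) :
    (l.map (blockRowConstant ι)).prod.charpoly =
      X ^ ((Fintype.card ι - 1) * Fintype.card n) *
        (l.map fun A : ι → Matrix n n R => ∑ i, A i).prod.charpoly := by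
  obtain ⟨A, l, rfl⟩ := List.exists_cons_of_ne_nil hl
  rw [prod_map_blockRowConstant_cons, charpoly_blockRowConstant, ← Finset.sum_mul, List.map_cons,
    List.prod_cons]

end BlockRowConstant

/-- **Lemma 3(c): eigenvalues of ordered products of block matrices with constant block rows.**
If each `N_t` is the `mn × mn` block matrix whose every block in the `i`-th block row equals
`X_{t,i}`, and `M_t = ∑_i X_{t,i}`, then
`charpoly(N₁ N₂ ⋯ N_k) = t^{(m−1)n} · charpoly(M₁ M₂ ⋯ M_k)`: the nonzero eigenvalues (with
multiplicity) of the ordered product of the `N_t` coincide with those of the ordered product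
of the `M_t`. -/
theorem blockRowConstant_prod_charpoly (m n k : ℕ) (hm : 1 ≤ m) (hn : 1 ≤ n) (hk : 1 ≤ k)
    (X : Fin k → Fin m → Matrix (Fin n) (Fin n) ℝ)
    (N : Fin k → Matrix (Fin m × Fin n) (Fin m × Fin n) ℝ)
    (hN : ∀ t i p j q, N t (i, p) (j, q) = X t i p q) :
    (List.ofFn N).prod.charpoly
      = Polynomial.X ^ ((m - 1) * n) * (List.ofFn fun t => ∑ i, X t i).prod.charpoly := by
  obtain rfl : N = fun t => blockRowConstant (Fin m) (X t) := by
    ext t ⟨i, p⟩ ⟨j, q⟩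
    exact hN t i p j q
  have : Nonempty (Fin m) := Fin.pos_iff_nonempty.mp hm
  simpa [List.map_ofFn, Function.comp_def] using
    blockRowConstant_prod_charpoly_general (List.ofFn X) (mt List.ofFn_eq_nil_iff.mp (by omega))
end

section
/- Let A₁,…,A_m be n × n real matrices and for each k ≥ 1 let π(k) = (π₁(k),…,π_m(k)) be an arbitrary probability vector. Define Γ(0) = I on ℝ^{n²} and Γ(k) = (∑_{j=1}^m π_j(k) (A_j ⊗ A_j)) Γ(k−1), and, for a given n × n matrix Φ(0), define Φ(k) = ∑_{j=1}^m π_j(k) A_j Φ(k−1) A_jᵀ. Then the following are equivalent: (i) for every symmetric positive semidefinite initial matrix Φ(0), tr(Φ(k)) → 0 as k → ∞; (ii) Γ(k) → 0 as k → ∞. Consequently, the stochastic jump linear system x(k+1) = A_{σ_k} x(k) with arbitrary switching probability π(k) is mean square stable if and only if Γ(k) converges to the zero matrix. -/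
open Matrix Filter
open scoped Kronecker

/-
The column-major vectorisation turns `X ↦ A X Aᴴ` into multiplication by `conj A ⊗ A`, so `Γ k` is
the matrix of the linear map `Φ0 ↦ Φ Φ0 k`. Being a composition of nonnegative combinations of such
conjugations, this map is completely positive, i.e. its Choi matrix is positive semidefinite. The
entries of the Choi matrix are those of `Γ k`, and they are bounded by its trace, which is
`tr (Φ 1 k)`. Hence `tr (Φ Φ0 k) → 0` for `Φ0 = 1` alone already forces `Γ k → 0`.
-/

section PosSemidefEntries

open scoped ComplexOrder

variable {n 𝕜 : Type*} [RCLike 𝕜] {M : Matrix n n 𝕜}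

lemma norm_apply_sq_le_of_posSemidef (hM : M.PosSemidef) (i j : n) :
    ‖M i j‖ ^ 2 ≤ RCLike.re (M i i) * RCLike.re (M j j) := by
  have minor_nonneg : 0 ≤ RCLike.re (M.submatrix ![i, j] ![i, j]).det :=
    (RCLike.nonneg_iff.mp (hM.submatrix ![i, j]).det_nonneg).1
  have diag_im : RCLike.im (M i i) = 0 := (RCLike.nonneg_iff.mp hM.diag_nonneg).2
  have off_diag : M i j * M j i = (‖M i j‖ ^ 2 : ℝ) := by
    rw [← hM.isHermitian.apply j i, ← starRingEnd_apply, RCLike.mul_conj, RCLike.ofReal_pow]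
  simp only [det_fin_two, submatrix_apply, cons_val_zero, cons_val_one, off_diag, map_sub,
    RCLike.mul_re, diag_im, zero_mul, sub_zero, RCLike.ofReal_re] at minor_nonneg
  exact sub_nonneg.mp minor_nonneg

lemma norm_apply_le_norm_trace_of_posSemidef [Fintype n] (hM : M.PosSemidef) (i j : n) :
    ‖M i j‖ ≤ ‖M.trace‖ := by
  have diag_nonneg (l : n) : 0 ≤ RCLike.re (M l l) := (RCLike.nonneg_iff.mp hM.diag_nonneg).1
  have diag_le (l : n) : RCLike.re (M l l) ≤ ‖M.trace‖ :=
    calc RCLike.re (M l l) ≤ ∑ l, RCLike.re (M l l) :=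
          Finset.single_le_sum (fun l _ => diag_nonneg l) (Finset.mem_univ l)
      _ = RCLike.re M.trace := (map_sum RCLike.re _ _).symm
      _ ≤ ‖M.trace‖ := RCLike.re_le_norm _
  refine le_of_sq_le_sq ?_ (norm_nonneg _)
  calc ‖M i j‖ ^ 2 ≤ RCLike.re (M i i) * RCLike.re (M j j) := norm_apply_sq_le_of_posSemidef hM i j
    _ ≤ ‖M.trace‖ * ‖M.trace‖ :=
        mul_le_mul (diag_le i) (diag_le j) (diag_nonneg j) (norm_nonneg _)
    _ = ‖M.trace‖ ^ 2 := (sq _).symm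

end PosSemidefEntries

section Choi

variable {l m n R : Type*} [CommSemiring R]

/-- The Choi matrix `∑ p q, E_pq ⊗ f (E_pq)` of the linear map `f : Matrix n n R → Matrix m m R`
whose matrix with respect to the column-major vectorisation `Matrix.vec` is `G`, so that
`f (E_pq) i j = G (j, i) (q, p)`. -/
def choiMatrix : Matrix (m × m) (n × n) R →ₗ[R] Matrix (n × m) (n × m) R where
  toFun G := of fun a b => G (b.2, a.2) (b.1, a.1)
  map_add' _ _ := rfl
  map_smul' _ _ := rfl

lemma choiMatrix_apply (G : Matrix (m × m) (n × n) R) (a b : n × m) :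
    choiMatrix G a b = G (b.2, a.2) (b.1, a.1) :=
  rfl

lemma choiMatrix_one [DecidableEq n] :
    choiMatrix (1 : Matrix (n × n) (n × n) R) = vecMulVec (vec 1) (vec 1) := by
  ext ⟨p, i⟩ ⟨q, j⟩
  simp [choiMatrix_apply, vecMulVec_apply, one_apply, ← ite_and, and_comm, eq_comm]

lemma trace_choiMatrix [Fintype m] [Fintype n] [DecidableEq m] [DecidableEq n]
    (G : Matrix (m × m) (n × n) R) : (choiMatrix G).trace = vec 1 ⬝ᵥ (G *ᵥ vec 1) := by
  simp only [trace, diag_apply, choiMatrix_apply, Fintype.sum_prod_type, dotProduct, vec, one_apply,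
    mulVec, mul_ite, mul_one, mul_zero, Finset.sum_ite_eq', Finset.mem_univ, if_true, ite_mul,
    one_mul, zero_mul]
  exact Finset.sum_comm

lemma choiMatrix_kronecker_mul [StarRing R] [Fintype m] [Fintype n] [DecidableEq n]
    (A : Matrix l m R) (G : Matrix (m × m) (n × n) R) :
    choiMatrix ((A.map star ⊗ₖ A) * G) =
      ((1 : Matrix n n R) ⊗ₖ A) * choiMatrix G * ((1 : Matrix n n R) ⊗ₖ A)ᴴ := by
  ext ⟨p, i⟩ ⟨q, j⟩
  simp only [choiMatrix_apply, mul_apply, kroneckerMap_apply, map_apply, Fintype.sum_prod_type,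
    one_apply, ite_mul, one_mul, zero_mul, Finset.sum_ite_irrel, Finset.sum_const_zero,
    Finset.sum_ite_eq, Finset.mem_univ, if_true, conjTranspose_apply, apply_ite star, star_zero,
    mul_ite, Finset.sum_mul, mul_zero]
  exact Finset.sum_congr rfl fun _ _ => Finset.sum_congr rfl fun _ _ => mul_rotate _ _ _

end Choi

section SecondMoments

variable {ι n : Type*} [Fintype ι] [Fintype n] [DecidableEq n]

open scoped ComplexOrder in
lemma posSemidef_choiMatrix {𝕜 : Type*} [RCLike 𝕜] {A : ι → Matrix n n 𝕜} {w : ℕ → ι → ℝ}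
    {Γ : ℕ → Matrix (n × n) (n × n) 𝕜} (hw : ∀ k j, 0 ≤ w (k + 1) j) (hΓ0 : Γ 0 = 1)
    (hΓ : ∀ k, Γ (k + 1) = (∑ j, w (k + 1) j • ((A j).map star ⊗ₖ A j)) * Γ k) (k : ℕ) :
    (choiMatrix (Γ k)).PosSemidef := by
  induction k with
  | zero =>
    have star_vec_one : star (vec (1 : Matrix n n 𝕜)) = vec 1 := by
      rw [star_vec, Matrix.map_one star (star_zero 𝕜) (star_one 𝕜)]
    rw [hΓ0, choiMatrix_one]
    nth_rw 2 [← star_vec_one]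
    exact posSemidef_vecMulVec_self_star _
  | succ k ih =>
    simp only [hΓ, Matrix.sum_mul, smul_mul, map_sum, LinearMap.map_smul_of_tower,
      choiMatrix_kronecker_mul]
    exact posSemidef_sum _ fun j _ => (ih.mul_mul_conjTranspose_same _).smul (hw k j)

lemma mulVec_vec_secondMoment {S R : Type*} [CommSemiring R] [StarRing R] [DistribSMul S R]
    [IsScalarTower S R R] {A : ι → Matrix n n R} {w : ℕ → ι → S}
    {Γ : ℕ → Matrix (n × n) (n × n) R} {X : ℕ → Matrix n n R} (hΓ0 : Γ 0 = 1)
    (hΓ : ∀ k, Γ (k + 1) = (∑ j, w (k + 1) j • ((A j).map star ⊗ₖ A j)) * Γ k)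
    (hX : ∀ k, X (k + 1) = ∑ j, w (k + 1) j • (A j * X k * (A j)ᴴ)) (k : ℕ) :
    Γ k *ᵥ vec (X 0) = vec (X k) := by
  induction k with
  | zero => rw [hΓ0, one_mulVec]
  | succ k ih =>
    rw [hΓ, hX, ← mulVec_mulVec, ih, sum_mulVec, vec_sum]
    refine Finset.sum_congr rfl fun j _ => ?_
    rw [smul_mulVec, kronecker_mulVec_vec, vec_smul, conjTranspose, transpose_map]

end SecondMoments

open scoped ComplexOrder in
theorem general_jump_mean_square_stability_general {ι n 𝕜 : Type*} [Fintype ι] [Fintype n]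
    [DecidableEq n] [RCLike 𝕜] (A : ι → Matrix n n 𝕜) (w : ℕ → ι → ℝ)
    (hw : ∀ k j, 0 ≤ w (k + 1) j) (Γ : ℕ → Matrix (n × n) (n × n) 𝕜) (hΓ0 : Γ 0 = 1)
    (hΓ : ∀ k, Γ (k + 1) = (∑ j, w (k + 1) j • ((A j).map star ⊗ₖ A j)) * Γ k)
    (Φ : Matrix n n 𝕜 → ℕ → Matrix n n 𝕜) (hΦ0 : ∀ Φ0, Φ Φ0 0 = Φ0)
    (hΦ : ∀ Φ0 k, Φ Φ0 (k + 1) = ∑ j, w (k + 1) j • (A j * Φ Φ0 k * (A j)ᴴ)) :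
    [∀ Φ0 : Matrix n n 𝕜, Φ0.PosSemidef → Tendsto (fun k => (Φ Φ0 k).trace) atTop (nhds 0),
      Tendsto (fun k => (Φ 1 k).trace) atTop (nhds 0),
      Tendsto Γ atTop (nhds 0),
      ∀ Φ0, Tendsto (Φ Φ0) atTop (nhds 0)].TFAE := by
  have vec_moment (Φ0 : Matrix n n 𝕜) (k : ℕ) : Γ k *ᵥ vec Φ0 = vec (Φ Φ0 k) := by
    simpa only [hΦ0] using mulVec_vec_secondMoment hΓ0 hΓ (hΦ Φ0) k
  tfae_have 1 → 2 := fun h => h 1 .one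
  tfae_have 2 → 3 := by
    intro h
    have trace_choiMatrix_eq (k : ℕ) : (choiMatrix (Γ k)).trace = (Φ 1 k).trace := by
      rw [trace_choiMatrix, vec_moment, vec_dotProduct_vec, transpose_one, one_mul]
    refine tendsto_pi_nhds.2 fun ⟨j, i⟩ => tendsto_pi_nhds.2 fun ⟨q, p⟩ => ?_
    refine squeeze_zero_norm (fun k => ?_) (tendsto_zero_iff_norm_tendsto_zero.1 h)
    rw [← trace_choiMatrix_eq]
    exact norm_apply_le_norm_trace_of_posSemidef (posSemidef_choiMatrix hw hΓ0 hΓ k) (p, i) (q, j)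
  tfae_have 3 → 4 := by
    intro h Φ0
    have mulVec_continuous : Continuous fun G : Matrix (n × n) (n × n) 𝕜 => G *ᵥ vec Φ0 :=
      continuous_id.matrix_mulVec continuous_const
    have vec_tendsto : Tendsto (fun k => vec (Φ Φ0 k)) atTop (nhds 0) :=
      ((mulVec_continuous.tendsto' 0 0 (zero_mulVec _)).comp h).congr (vec_moment Φ0)
    exact tendsto_pi_nhds.2 fun i => tendsto_pi_nhds.2 fun j => tendsto_pi_nhds.1 vec_tendsto (j, i)
  tfae_have 4 → 1 := by
    intro h Φ0 _
    exact (continuous_id.matrix_trace.tendsto' 0 0 (trace_zero n 𝕜)).comp (h Φ0)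
  tfae_finish

/-- **Mean square stability for general stochastic jump linear systems (Theorem 4).**
With `Γ(k) = (∑_j π_j(k) (A_j ⊗ A_j)) Γ(k−1)`, `Γ(0) = I`, and the second-moment recursion
`Φ(k) = ∑_j π_j(k) A_j Φ(k−1) A_jᵀ` started from an arbitrary symmetric positive semidefinite
`Φ(0)`, the system is mean square stable — i.e. `tr(Φ(k)) → 0` for every such `Φ(0)` — if and
only if `Γ(k) → 0`. -/
theorem general_jump_mean_square_stability (n m : ℕ) (hm : 1 ≤ m)
    (A : Fin m → Matrix (Fin n) (Fin n) ℝ)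
    (π : ℕ → Fin m → ℝ) (hπnn : ∀ k j, 1 ≤ k → 0 ≤ π k j)
    (hπsum : ∀ k, 1 ≤ k → ∑ j, π k j = 1)
    (Γ : ℕ → Matrix (Fin n × Fin n) (Fin n × Fin n) ℝ)
    (hΓ0 : Γ 0 = 1)
    (hΓ : ∀ k, Γ (k + 1) = (∑ j, π (k + 1) j • (A j ⊗ₖ A j)) * Γ k)
    (Φ : Matrix (Fin n) (Fin n) ℝ → ℕ → Matrix (Fin n) (Fin n) ℝ)
    (hΦ0 : ∀ Φ0, Φ Φ0 0 = Φ0)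
    (hΦ : ∀ Φ0 k, Φ Φ0 (k + 1) = ∑ j, π (k + 1) j • (A j * Φ Φ0 k * (A j)ᵀ)) :
    (∀ Φ0 : Matrix (Fin n) (Fin n) ℝ, Φ0.PosSemidef →
        Tendsto (fun k => (Φ Φ0 k).trace) atTop (nhds 0))
      ↔ Tendsto Γ atTop (nhds 0) := by
  have map_star (j : Fin m) : (A j).map star = A j := ext fun _ _ => star_trivial _
  simp only [← conjTranspose_eq_transpose_of_trivial] at hΦ
  exact (general_jump_mean_square_stability_general A π (fun k j => hπnn _ j (Nat.le_add_left 1 k))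
    Γ hΓ0 (by simpa only [map_star] using hΓ) Φ hΦ0 hΦ).out 0 2
end
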